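/- (Example: hyperbolic cosine distribution, Lévy density.) For every real x ≠ 0, (1/(2πx²)) · ∫_ℝ e^{−izx} · (π²/4) · (1/cosh(πz/2))² dz = 1/(x(e^x − e^{−x})). Equivalently, with ψ(z) = −log cosh(πz/2) (so that e^{ψ(z)} = 1/cosh(πz/2) is the characteristic function of the hyperbolic cosine distribution and ψ''(z) = −(π²/4)/cosh²(πz/2)), the formula u(x) = −(1/(2πx²)) ∫_ℝ e^{−izx} ψ''(z) dz yields u(x) = 1/(x(e^x − e^{−x})). -/

import Mathlib

open MeasureTheory

/-!
The substitution `u = σ(t)`, with `σ` the logistic function, turns Euler's Beta integral into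
`B(a, b) = ∫_ℝ e^{(a - b)t/2} (2 cosh (t/2))^{-(a + b)} dt`. For `a = 1 - s` and `b = 1 + s` this is
the bilateral Laplace transform of `1 / (4 cosh² (t/2))`, whose value `Γ(1 - s) Γ(1 + s)` is
`πs / sin (πs)` by the reflection formula. Taking `s` purely imaginary gives the Fourier transform
of `1 / cosh²`, the second derivative of `log ∘ cosh`.
-/

section Logistic

open Real

lemma integral_Ioo_zero_one_eq_integral_sigmoid {E : Type*} [NormedAddCommGroup E]
    [NormedSpace ℝ E] (f : ℝ → E) :
    ∫ u in Set.Ioo 0 1, f u = ∫ t, (sigmoid t * sigmoid (-t)) • f (sigmoid t) := by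
  have deriv_at (t : ℝ) (_ : t ∈ Set.univ) :
      HasDerivWithinAt sigmoid (sigmoid t * sigmoid (-t)) Set.univ t := by
    rw [sigmoid_neg]
    exact (hasDerivAt_sigmoid t).hasDerivWithinAt
  have deriv_pos (t : ℝ) : 0 < sigmoid t * sigmoid (-t) :=
    mul_pos (sigmoid_pos t) (sigmoid_pos (-t))
  rw [← range_sigmoid, ← Set.image_univ, integral_image_eq_integral_abs_deriv_smul
    MeasurableSet.univ deriv_at sigmoid_injective.injOn, setIntegral_univ]
  simp only [abs_of_pos (deriv_pos _)]

lemma sigmoid_eq_exp_div_two_mul_cosh (t : ℝ) :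
    sigmoid t = exp (t / 2) / (2 * cosh (t / 2)) := by
  have exp_neg_eq : exp (-t) = exp (-(t / 2)) / exp (t / 2) := by
    rw [← exp_sub]
    ring_nf
  rw [sigmoid_def, cosh_eq, exp_neg_eq]
  field_simp

lemma betaIntegral_eq_integral_sigmoid (a b : ℂ) :
    Complex.betaIntegral a b = ∫ t : ℝ, (sigmoid t : ℂ) ^ a * (sigmoid (-t) : ℂ) ^ b := by
  rw [Complex.betaIntegral, intervalIntegral.integral_of_le zero_le_one,
    integral_Ioc_eq_integral_Ioo, integral_Ioo_zero_one_eq_integral_sigmoid]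
  congr with t
  have sigmoid_ne_zero (r : ℝ) : (sigmoid r : ℂ) ≠ 0 := mod_cast (sigmoid_pos r).ne'
  rw [← Complex.ofReal_one, ← Complex.ofReal_sub, ← sigmoid_neg, Complex.real_smul,
    Complex.ofReal_mul, Complex.ofReal_one, Complex.cpow_sub _ _ (sigmoid_ne_zero _),
    Complex.cpow_sub _ _ (sigmoid_ne_zero _), Complex.cpow_one, Complex.cpow_one]
  field_simp [sigmoid_ne_zero]

lemma betaIntegral_eq_integral_exp_div_cosh (a b : ℂ) :
    Complex.betaIntegral a b =
      ∫ t : ℝ, Complex.exp ((a - b) * t / 2) / ((2 * cosh (t / 2) : ℝ) : ℂ) ^ (a + b) := by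
  rw [betaIntegral_eq_integral_sigmoid]
  congr with t
  have two_mul_cosh_pos : 0 < 2 * cosh (t / 2) := by positivity
  have sigmoid_cpow (r : ℝ) (w : ℂ) : (sigmoid r : ℂ) ^ w =
      Complex.exp (r / 2 * w) / ((2 * cosh (r / 2) : ℝ) : ℂ) ^ w := by
    rw [sigmoid_eq_exp_div_two_mul_cosh, Complex.ofReal_div,
      Complex.div_cpow_ofReal_nonneg (exp_pos _).le (by positivity),
      Complex.cpow_def_of_ne_zero (mod_cast (exp_pos _).ne'), ← Complex.ofReal_log (exp_pos _).le,
      log_exp, Complex.ofReal_div, Complex.ofReal_ofNat]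
  rw [sigmoid_cpow, sigmoid_cpow, neg_div, cosh_neg, div_mul_div_comm, ← Complex.exp_add,
    ← Complex.cpow_add _ _ (mod_cast two_mul_cosh_pos.ne')]
  congr 2
  push_cast
  ring

end Logistic

section Transforms

open Complex

lemma betaIntegral_one_sub_one_add {s : ℂ} (hs : s ≠ 0) (hre : |s.re| < 1) :
    betaIntegral (1 - s) (1 + s) = Real.pi * s / sin (Real.pi * s) := by
  obtain ⟨hre_gt, hre_lt⟩ := abs_lt.mp hre
  have Gamma_two : Gamma (1 - s + (1 + s)) = 1 := by
    rw [show 1 - s + (1 + s) = ((1 : ℕ) : ℂ) + 1 by push_cast; ring, Gamma_nat_eq_factorial,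
      Nat.factorial_one, Nat.cast_one]
  calc betaIntegral (1 - s) (1 + s)
      = Gamma (1 - s) * Gamma (s + 1) := by
        rw [betaIntegral_eq_Gamma_mul_div _ _ (by simpa using hre_lt)
          (by rw [add_re, one_re]; linarith), Gamma_two, div_one, add_comm 1 s]
    _ = s * (Gamma s * Gamma (1 - s)) := by rw [Gamma_add_one s hs]; ring
    _ = Real.pi * s / sin (Real.pi * s) := by rw [Gamma_mul_Gamma_one_sub]; ring

lemma integral_exp_neg_mul_div_cosh_half_sq {s : ℂ} (hs : s ≠ 0) (hre : |s.re| < 1) :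
    ∫ t : ℝ, exp (-(s * t)) / (Real.cosh (t / 2) : ℂ) ^ 2 =
      4 * Real.pi * s / sin (Real.pi * s) := by
  have integrand_eq (t : ℝ) : exp (-(s * t)) / (Real.cosh (t / 2) : ℂ) ^ 2 =
      4 * (exp ((1 - s - (1 + s)) * t / 2) /
        ((2 * Real.cosh (t / 2) : ℝ) : ℂ) ^ (1 - s + (1 + s))) := by
    rw [show 1 - s + (1 + s) = ((2 : ℕ) : ℂ) by push_cast; ring, cpow_natCast,
      show (1 - s - (1 + s)) * t / 2 = -(s * t) by ring, ofReal_mul, ofReal_ofNat]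
    ring
  simp only [integrand_eq]
  rw [integral_const_mul, ← betaIntegral_eq_integral_exp_div_cosh,
    betaIntegral_one_sub_one_add hs hre]
  ring

lemma integral_exp_neg_I_mul_sq_div_cosh_mul_sq {c x : ℝ} (hc : 0 < c) (hx : x ≠ 0) :
    ∫ z : ℝ, exp (-(I * z * x)) * ((c ^ 2 / Real.cosh (c * z) ^ 2 : ℝ) : ℂ) =
      Real.pi * x / sinh (Real.pi * x / (2 * c)) := by
  have hc' : (c : ℂ) ≠ 0 := mod_cast hc.ne'
  set s : ℂ := x / (2 * c) * I with hs
  have s_ne_zero : s ≠ 0 := by simp [hs, hx, hc']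
  have s_re : s.re = 0 := by
    rw [hs, mul_I_re, ← ofReal_ofNat, ← ofReal_mul, ← ofReal_div, ofReal_im, neg_zero]
  have integrand_eq (z : ℝ) :
      exp (-(I * z * x)) * ((c ^ 2 / Real.cosh (c * z) ^ 2 : ℝ) : ℂ) =
        c ^ 2 * (exp (-(s * (2 * c * z : ℝ))) / (Real.cosh (2 * c * z / 2) : ℂ) ^ 2) := by
    rw [show 2 * c * z / 2 = c * z by ring,
      show s * (2 * c * z : ℝ) = I * z * x by rw [hs]; push_cast; field_simp]
    push_cast
    ring
  simp only [integrand_eq]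
  rw [integral_const_mul, Measure.integral_comp_mul_left
      (fun t : ℝ ↦ exp (-(s * t)) / (Real.cosh (t / 2) : ℂ) ^ 2),
    integral_exp_neg_mul_div_cosh_half_sq s_ne_zero (by simp [s_re]),
    abs_of_pos (by positivity), real_smul,
    show Real.pi * s = Real.pi * x / (2 * c) * I by rw [hs]; ring, sin_mul_I, hs]
  push_cast
  field_simp
  norm_num

end Transforms

section LogCosh

open Real

lemma hasDerivAt_log_cosh (x : ℝ) : HasDerivAt (fun x ↦ log (cosh x)) (tanh x) x := by
  rw [tanh_eq_sinh_div_cosh]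
  exact (hasDerivAt_cosh x).log (cosh_pos x).ne'

lemma hasDerivAt_tanh (x : ℝ) : HasDerivAt tanh (1 / cosh x ^ 2) x := by
  have quotient_rule := (hasDerivAt_sinh x).div (hasDerivAt_cosh x) (cosh_pos x).ne'
  rw [← sq, ← sq, cosh_sq_sub_sinh_sq] at quotient_rule
  exact quotient_rule.congr_of_eventuallyEq (.of_forall tanh_eq_sinh_div_cosh)

lemma deriv_deriv_log_cosh_mul (c z : ℝ) :
    deriv (deriv fun z : ℝ ↦ Complex.log (cosh (c * z))) z =
      ((c ^ 2 / cosh (c * z) ^ 2 : ℝ) : ℂ) := by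
  have mul_left_deriv (z : ℝ) : HasDerivAt (fun z ↦ c * z) c z := by
    simpa using (hasDerivAt_id z).const_mul c
  have first_deriv : deriv (fun z : ℝ ↦ Complex.log (cosh (c * z))) =
      fun z ↦ ((tanh (c * z) * c : ℝ) : ℂ) := by
    simp only [← Complex.ofReal_log (cosh_pos _).le]
    exact funext fun z ↦ ((hasDerivAt_log_cosh _).comp z (mul_left_deriv z)).ofReal_comp.deriv
  rw [first_deriv]
  refine (((hasDerivAt_tanh _).comp z (mul_left_deriv z)).mul_const c).ofReal_comp.deriv.trans ?_
  congr 1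
  ring

end LogCosh

/-- **hyperbolic cosine distribution, Lévy density.** For every `x ≠ 0`,
`(1/(2πx²)) ∫_ℝ e^{−izx} (π²/4)(1/cosh(πz/2))² dz = 1/(x(e^x − e^{−x}))`. Equivalently,
with `ψ(z) = −log cosh(πz/2)`, the formula `u(x) = −(1/(2πx²)) ∫_ℝ e^{−izx} ψ''(z) dz`
yields `u(x) = 1/(x(e^x − e^{−x}))`. -/
theorem statement15 :
    (∀ x : ℝ, x ≠ 0 →
      (1 / (2 * (Real.pi : ℂ) * (x : ℂ) ^ 2)) *
          (∫ z : ℝ, Complex.exp (-(Complex.I * (z : ℂ) * (x : ℂ))) *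
            ((Real.pi ^ 2 / 4 * (1 / Real.cosh (Real.pi * z / 2)) ^ 2 : ℝ) : ℂ))
        = ((1 / (x * (Real.exp x - Real.exp (-x))) : ℝ) : ℂ)) ∧
    (∀ ψ : ℝ → ℂ, (∀ z : ℝ, ψ z = -Complex.log ((Real.cosh (Real.pi * z / 2) : ℝ) : ℂ)) →
      ∀ x : ℝ, x ≠ 0 →
        -(1 / (2 * (Real.pi : ℂ) * (x : ℂ) ^ 2)) *
            (∫ z : ℝ, Complex.exp (-(Complex.I * (z : ℂ) * (x : ℂ))) * deriv (deriv ψ) z)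
          = ((1 / (x * (Real.exp x - Real.exp (-x))) : ℝ) : ℂ)) := by
  have density_eq (z : ℝ) : Real.pi ^ 2 / 4 * (1 / Real.cosh (Real.pi * z / 2)) ^ 2 =
      (Real.pi / 2) ^ 2 / Real.cosh (Real.pi / 2 * z) ^ 2 := by
    rw [mul_div_right_comm Real.pi]
    ring
  have levy_density (x : ℝ) (hx : x ≠ 0) :
      1 / (2 * (Real.pi : ℂ) * x ^ 2) * (∫ z : ℝ, Complex.exp (-(Complex.I * z * x)) *
        (((Real.pi / 2) ^ 2 / Real.cosh (Real.pi / 2 * z) ^ 2 : ℝ) : ℂ)) =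
      ((1 / (x * (Real.exp x - Real.exp (-x))) : ℝ) : ℂ) := by
    rw [integral_exp_neg_I_mul_sq_div_cosh_mul_sq Real.pi_div_two_pos hx,
      show Real.exp x - Real.exp (-x) = 2 * Real.sinh x by rw [Real.sinh_eq]; ring]
    push_cast
    field_simp
  simp only [density_eq]
  refine ⟨levy_density, fun ψ hψ x hx ↦ ?_⟩
  have deriv_deriv_ψ (z : ℝ) : deriv (deriv ψ) z =
      -(((Real.pi / 2) ^ 2 / Real.cosh (Real.pi / 2 * z) ^ 2 : ℝ) : ℂ) := by
    simp only [funext hψ, mul_div_right_comm Real.pi, deriv.fun_neg', deriv_deriv_log_cosh_mul]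
  simp only [deriv_deriv_ψ, mul_neg, integral_neg, neg_mul, neg_neg, levy_density x hx]
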